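/- Let φ = C_1 ∧ ⋯ ∧ C_k be a 3-SAT formula in Boolean variables y_1, …, y_n, where each clause C_i = y_{i_1}^{τ_{i_1}} ∨ y_{i_2}^{τ_{i_2}} ∨ y_{i_3}^{τ_{i_3}} is a disjunction of three literals on pairwise distinct variables (here y^1 = y and y^0 = ¬y). For 1 ≤ j ≤ n let h_j be the tropical polynomial x ↦ min(2x_j, x_j, 1) in n variables, and for 1 ≤ i ≤ k let f_i be the tropical product (0·x_{i_1} ⊕ τ_{i_1}) ⊙ (0·x_{i_2} ⊕ τ_{i_2}) ⊙ (0·x_{i_3} ⊕ τ_{i_3}). Then the tropical prevariety P = ⋂_{j=1}^n T(h_j) ∩ ⋂_{i=1}^k T(f_i) is a finite set, and its cardinality equals the number of satisfying assignments of φ. -/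

import Mathlib

open Finset Pointwise

/-- The affine-linear function given by a tropical term with coefficient `c`
and exponent vector `α`. -/
def tropTerm {n : ℕ} (c : ℝ) (α : Fin n → ℕ) (x : Fin n → ℝ) : ℝ :=
  c + ∑ j, (α j : ℝ) * x j

/-- The tropical hypersurface of the tropical polynomial with support `A`
and coefficients `c`: the set of points where the minimum of the terms is
attained at least twice. -/
def tropHyp {n : ℕ} (A : Finset (Fin n → ℕ)) (c : (Fin n → ℕ) → ℝ) :
    Set (Fin n → ℝ) :=
  {x | ∃ α ∈ A, ∃ β ∈ A, α ≠ β ∧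
    tropTerm (c α) α x = tropTerm (c β) β x ∧
    ∀ γ ∈ A, tropTerm (c α) α x ≤ tropTerm (c γ) γ x}

/-- A tropical polynomial: a (finite) support of exponent vectors, and coefficients. -/
structure TropPoly (n : ℕ) where
  supp : Finset (Fin n → ℕ)
  coeff : (Fin n → ℕ) → ℝ

def TropPoly.hyp {n : ℕ} (f : TropPoly n) : Set (Fin n → ℝ) :=
  tropHyp f.supp f.coeff

/-- Tropical product of two tropical polynomials. -/
noncomputable def TropPoly.mul {n : ℕ} (f g : TropPoly n) : TropPoly n where
  supp := f.supp + g.supp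
  coeff := fun γ =>
    sInf {r | ∃ α ∈ f.supp, ∃ β ∈ g.supp, α + β = γ ∧ r = f.coeff α + g.coeff β}

/-- The tropical multiplicative unit (the constant polynomial `0`). -/
def TropPoly.one (n : ℕ) : TropPoly n := ⟨{0}, fun _ => 0⟩

/-- Tropical product of a list of tropical polynomials. -/
noncomputable def TropPoly.listProd {n : ℕ} (l : List (TropPoly n)) : TropPoly n :=
  l.foldr TropPoly.mul (TropPoly.one n)

/-- The exponent vector `k · e_i`. -/
def single {n : ℕ} (i : Fin n) (k : ℕ) : Fin n → ℕ :=
  fun j => if j = i then k else 0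

/-- The structural tropical polynomial `h_j = 0·x_j² ⊕ 0·x_j ⊕ 1`. -/
def structuralPoly {n : ℕ} (j : Fin n) : TropPoly n :=
  ⟨{single j 2, single j 1, 0}, fun α => if α = 0 then (1 : ℝ) else 0⟩

/-- The tropical polynomial `0·x_j ⊕ τ` encoding the literal `y_j^τ`
(with `s(True) = 1`, `s(False) = 0`). -/
def literalPoly {n : ℕ} (j : Fin n) (τ : Bool) : TropPoly n :=
  ⟨{single j 1, 0}, fun α => if α = 0 then (if τ then (1 : ℝ) else 0) else 0⟩

/-- The clause tropical polynomial
`f_i = (0·x_{i₁} ⊕ τ_{i₁}) ⊙ (0·x_{i₂} ⊕ τ_{i₂}) ⊙ (0·x_{i₃} ⊕ τ_{i₃})`. -/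
noncomputable def clausePoly {n : ℕ} (idx : Fin 3 → Fin n) (τ : Fin 3 → Bool) :
    TropPoly n :=
  TropPoly.listProd [literalPoly (idx 0) (τ 0), literalPoly (idx 1) (τ 1),
    literalPoly (idx 2) (τ 2)]

/-- A Boolean assignment `a` satisfies the 3-SAT formula with clauses given by
variable indices `idx i` and signs `sgn i` (literal `y^1 = y`, `y^0 = ¬y`) iff
in every clause some literal evaluates to `True`. -/
def Satisfies {n k : ℕ} (idx : Fin k → Fin 3 → Fin n)
    (sgn : Fin k → Fin 3 → Bool) (a : Fin n → Bool) : Prop :=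
  ∀ i : Fin k, ∃ r : Fin 3, a (idx i r) = sgn i r

/-- The value of the literal sign. -/
def bv (τ : Bool) : ℝ := if τ then 1 else 0

lemma single_one_ne_zero {n : ℕ} (j : Fin n) : single j 1 ≠ 0 := by
  intro h
  have := congrFun h j
  simp [single] at this

lemma tropTerm_add {n : ℕ} (c d : ℝ) (α β : Fin n → ℕ) (x : Fin n → ℝ) :
    tropTerm (c + d) (α + β) x = tropTerm c α x + tropTerm d β x := by
  simp only [tropTerm, Pi.add_apply, Nat.cast_add, add_mul, Finset.sum_add_distrib]
  ring

lemma tropTerm_single {n : ℕ} (c : ℝ) (j : Fin n) (k : ℕ) (x : Fin n → ℝ) :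
    tropTerm c (single j k) x = c + k * x j := by
  simp [tropTerm, single]

lemma tropTerm_zero {n : ℕ} (c : ℝ) (x : Fin n → ℝ) :
    tropTerm c 0 x = c := by
  simp [tropTerm]

lemma structural_hyp {n : ℕ} (j : Fin n) (x : Fin n → ℝ) :
    x ∈ (structuralPoly j).hyp ↔ x j = 0 ∨ x j = 1 := by
  have h1 := single_one_ne_zero j
  have h2 : single j 2 ≠ 0 := by
    intro h
    have := congrFun h j
    simp [single] at this
  have h12 : single j 2 ≠ single j 1 := by
    intro h
    have := congrFun h j
    simp [single] at this
  simp only [TropPoly.hyp, tropHyp, structuralPoly, Set.mem_ofPred_eq, Finset.mem_insert,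
    Finset.mem_singleton, exists_eq_or_imp, forall_eq_or_imp, exists_eq_left, forall_eq,
    if_neg h1, if_neg h2, if_true, tropTerm_single, tropTerm_zero, ne_eq, not_true_eq_false,
    h1, h2, h12, h1.symm, h2.symm, h12.symm, not_false_eq_true, true_and, false_and, false_or,
    or_false]
  push_cast
  constructor
  · rintro ((h | h) | (h | h) | (h | h)) <;>
    first
    | (left; linarith)
    | (right; linarith)
  · rintro (h | h) <;> rw [h] <;> norm_num

section
variable {n : ℕ} (j : Fin n) (τ : Bool) (f : TropPoly n) (hf : ∀ α ∈ f.supp, α j = 0)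

/-- exponent of a literal term -/
def ev (j : Fin n) (b : Bool) : Fin n → ℕ := if b then single j 1 else 0

lemma ev_add_inj {j : Fin n} {b b' : Bool} {α α' : Fin n → ℕ} (h : α j = 0) (h' : α' j = 0)
    (e : ev j b + α = ev j b' + α') : b = b' ∧ α = α' := by
  have hb : b = b' := by
    have := congrFun e j
    cases b <;> cases b' <;> simp [ev, single, h, h'] at this ⊢
  subst hb
  exact ⟨rfl, add_left_cancel e⟩

lemma lit_coeff (b : Bool) : (literalPoly j τ).coeff (ev j b) = if b then 0 else bv τ := by
  cases b
  · simp [ev, literalPoly, bv]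
  · simp [ev, literalPoly, single_one_ne_zero]

lemma lit_supp (α : Fin n → ℕ) : α ∈ (literalPoly j τ).supp ↔ ∃ b, α = ev j b := by
  simp [literalPoly, ev, or_comm]

lemma mul_supp (γ : Fin n → ℕ) : γ ∈ ((literalPoly j τ).mul f).supp ↔
    ∃ b, ∃ α ∈ f.supp, γ = ev j b + α := by
  simp only [TropPoly.mul, Finset.mem_add, lit_supp]
  constructor
  · rintro ⟨_, ⟨b, rfl⟩, α, hα, rfl⟩
    exact ⟨b, α, hα, rfl⟩
  · rintro ⟨b, α, hα, rfl⟩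
    exact ⟨_, ⟨b, rfl⟩, α, hα, rfl⟩

include hf in
lemma mul_coeff (b : Bool) (α : Fin n → ℕ) (hα : α ∈ f.supp) :
    ((literalPoly j τ).mul f).coeff (ev j b + α) = (literalPoly j τ).coeff (ev j b) + f.coeff α := by
  simp only [TropPoly.mul]
  refine Eq.trans (congrArg sInf ?_)
    (csInf_singleton ((literalPoly j τ).coeff (ev j b) + f.coeff α))
  ext r
  simp only [Set.mem_ofPred_eq, Set.mem_singleton_iff, lit_supp]
  constructor
  · rintro ⟨_, ⟨b', rfl⟩, α', hα', e, rfl⟩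
    obtain ⟨rfl, rfl⟩ := ev_add_inj (hf _ hα') (hf _ hα) e
    rfl
  · rintro rfl
    exact ⟨_, ⟨b, rfl⟩, α, hα, rfl, rfl⟩

include hf in
lemma mul_term (b : Bool) (α : Fin n → ℕ) (hα : α ∈ f.supp) (x : Fin n → ℝ) :
    tropTerm (((literalPoly j τ).mul f).coeff (ev j b + α)) (ev j b + α) x
      = (if b then x j else bv τ) + tropTerm (f.coeff α) α x := by
  rw [mul_coeff j τ f hf b α hα, tropTerm_add, lit_coeff]
  cases b
  · simp [ev, tropTerm_zero]
  · simp [ev, tropTerm_single]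

include hf in
lemma mul_hyp (hne : f.supp.Nonempty) (x : Fin n → ℝ) :
    x ∈ ((literalPoly j τ).mul f).hyp ↔ x j = bv τ ∨ x ∈ f.hyp := by
  constructor
  · rintro ⟨γ, hγ, δ, hδ, hne, heq, hmin⟩
    obtain ⟨b, α, hα, rfl⟩ := (mul_supp j τ f _).1 hγ
    obtain ⟨c, β, hβ, rfl⟩ := (mul_supp j τ f _).1 hδ
    have hm : ∀ b' : Bool, ∀ α' ∈ f.supp,
        (if b then x j else bv τ) + tropTerm (f.coeff α) α x ≤
        (if b' then x j else bv τ) + tropTerm (f.coeff α') α' x := by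
      intro b' α' hα'
      have := hmin _ ((mul_supp j τ f _).2 ⟨b', α', hα', rfl⟩)
      rwa [mul_term j τ f hf _ _ hα, mul_term j τ f hf _ _ hα'] at this
    rw [mul_term j τ f hf _ _ hα, mul_term j τ f hf _ _ hβ] at heq
    by_cases hbc : b = c
    · subst hbc
      right
      refine ⟨α, hα, β, hβ, fun h => hne (by rw [h]), by linarith, fun γ hγ => ?_⟩
      linarith [hm b γ hγ]
    · left
      have e1 := hm c α hα
      have e2 := hm b β hβ
      cases b <;> cases c <;> simp at * <;> linarith
  · rintro (h | ⟨α, hα, β, hβ, hab, heq, hmin⟩)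
    · obtain ⟨α, hα, hmin⟩ := f.supp.exists_min_image (fun α => tropTerm (f.coeff α) α x) hne
      refine ⟨_, (mul_supp j τ f _).2 ⟨true, α, hα, rfl⟩, _,
        (mul_supp j τ f _).2 ⟨false, α, hα, rfl⟩, ?_, ?_, ?_⟩
      · intro e
        simpa using (ev_add_inj (hf _ hα) (hf _ hα) e).1
      · rw [mul_term j τ f hf _ _ hα, mul_term j τ f hf _ _ hα]
        simp [h]
      · intro γ hγ
        obtain ⟨c, β, hβ, rfl⟩ := (mul_supp j τ f _).1 hγ
        rw [mul_term j τ f hf _ _ hα, mul_term j τ f hf _ _ hβ]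
        have := hmin β hβ
        cases c <;> simp [h, this]
    · obtain ⟨b, hb⟩ : ∃ b : Bool, ∀ c : Bool,
          (if b then x j else bv τ) ≤ (if c then x j else bv τ) := by
        rcases le_total (x j) (bv τ) with h | h
        · exact ⟨true, by simp [h]⟩
        · exact ⟨false, by simp [h]⟩
      refine ⟨_, (mul_supp j τ f _).2 ⟨b, α, hα, rfl⟩, _,
        (mul_supp j τ f _).2 ⟨b, β, hβ, rfl⟩, ?_, ?_, ?_⟩
      · intro e
        exact hab (ev_add_inj (hf _ hα) (hf _ hβ) e).2
      · rw [mul_term j τ f hf _ _ hα, mul_term j τ f hf _ _ hβ, heq]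
      · intro γ hγ
        obtain ⟨c, β, hβ, rfl⟩ := (mul_supp j τ f _).1 hγ
        rw [mul_term j τ f hf _ _ hα, mul_term j τ f hf _ _ hβ]
        linarith [hmin β hβ, hb c]

lemma mul_nonempty (hne : f.supp.Nonempty) : ((literalPoly j τ).mul f).supp.Nonempty := by
  obtain ⟨α, hα⟩ := hne
  exact ⟨_, (mul_supp j τ f _).2 ⟨true, α, hα, rfl⟩⟩

lemma mul_free (i : Fin n) (hij : i ≠ j) (hf : ∀ α ∈ f.supp, α i = 0) :
    ∀ α ∈ ((literalPoly j τ).mul f).supp, α i = 0 := by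
  intro γ hγ
  obtain ⟨c, β, hβ, rfl⟩ := (mul_supp j τ f _).1 hγ
  cases c <;> simp [ev, single, hij, hf β hβ]

end

lemma one_hyp {n : ℕ} (x : Fin n → ℝ) : x ∉ (TropPoly.one n).hyp := by
  rintro ⟨α, hα, β, hβ, h, -⟩
  simp only [TropPoly.one, Finset.mem_singleton] at hα hβ
  exact h (hα.trans hβ.symm)

lemma clause_hyp {n : ℕ} (idx : Fin 3 → Fin n) (τ : Fin 3 → Bool)
    (hinj : Function.Injective idx) (x : Fin n → ℝ) :
    x ∈ (clausePoly idx τ).hyp ↔ ∃ r, x (idx r) = bv (τ r) := by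
  have h01 : idx 0 ≠ idx 1 := hinj.ne (by decide)
  have h02 : idx 0 ≠ idx 2 := hinj.ne (by decide)
  have h12 : idx 1 ≠ idx 2 := hinj.ne (by decide)
  have hfree : ∀ i : Fin n, ∀ α ∈ (TropPoly.one n).supp, α i = 0 := by
    intro i α hα
    simp only [TropPoly.one, Finset.mem_singleton] at hα
    simp [hα]
  have hne : (TropPoly.one n).supp.Nonempty := by simp [TropPoly.one]
  simp only [clausePoly, TropPoly.listProd, List.foldr]
  rw [mul_hyp, mul_hyp, mul_hyp]
  · simp [Fin.exists_fin_succ, one_hyp]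
  · exact hfree _
  · exact hne
  · exact mul_free _ _ _ _ h12 (hfree _)
  · exact mul_nonempty _ _ _ hne
  · exact mul_free _ _ _ _ h01 (mul_free _ _ _ _ h02 (hfree _))
  · exact mul_nonempty _ _ _ (mul_nonempty _ _ _ hne)

lemma bv_inj {a b : Bool} : bv a = bv b ↔ a = b := by
  cases a <;> cases b <;> simp [bv]

/-- The tropical prevariety built from the structural hypersurfaces `T(h_j)`
and the clause hypersurfaces `T(f_i)` of a 3-SAT formula is a finite set whose
cardinality is the number of satisfying assignments of the formula. -/
theorem sat_prevariety_count (n k : ℕ) (idx : Fin k → Fin 3 → Fin n)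
    (sgn : Fin k → Fin 3 → Bool)
    (hdistinct : ∀ i, Function.Injective (idx i)) :
    ((⋂ j : Fin n, (structuralPoly j).hyp) ∩
        ⋂ i : Fin k, (clausePoly (idx i) (sgn i)).hyp).Finite ∧
    ((⋂ j : Fin n, (structuralPoly j).hyp) ∩
        ⋂ i : Fin k, (clausePoly (idx i) (sgn i)).hyp).ncard
      = Nat.card {a : Fin n → Bool // Satisfies idx sgn a} := by
  have key : ((⋂ j : Fin n, (structuralPoly j).hyp) ∩
        ⋂ i : Fin k, (clausePoly (idx i) (sgn i)).hyp) =
      (fun (a : Fin n → Bool) (j : Fin n) => bv (a j)) '' {a | Satisfies idx sgn a} := by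
    ext x
    simp only [Set.mem_inter_iff, Set.mem_iInter, structural_hyp,
      fun i => clause_hyp (idx i) (sgn i) (hdistinct i), Set.mem_image, Set.mem_ofPred_eq]
    constructor
    · rintro ⟨h1, h2⟩
      have : ∀ j, ∃ b, bv b = x j := by
        intro j
        rcases h1 j with h | h
        · exact ⟨false, by simp [bv, h]⟩
        · exact ⟨true, by simp [bv, h]⟩
      choose a ha using this
      refine ⟨a, fun i => ?_, funext ha⟩
      obtain ⟨r, hr⟩ := h2 i
      exact ⟨r, bv_inj.1 ((ha _).trans hr)⟩
    · rintro ⟨a, ha, rfl⟩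
      refine ⟨fun j => ?_, fun i => ?_⟩
      · cases a j <;> simp [bv]
      · obtain ⟨r, hr⟩ := ha i
        exact ⟨r, bv_inj.2 hr⟩
  rw [key]
  refine ⟨(Set.toFinite _).image _, ?_⟩
  rw [Set.ncard_image_of_injective]
  · rfl
  · intro a b hab
    funext j
    exact bv_inj.1 (congrFun hab j)
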